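/- Let R be a Cohen-Macaulay commutative noetherian local ring with maximal ideal m. If the ideal ⋂ Ann_R Tor_i^R(M,N), where the intersection ranges over all integers i > 0 and all modules M, N in CM_0(R), is m-primary (i.e., its radical equals m), then R is an isolated singularity, that is, R_p is a regular local ring for every nonmaximal prime ideal p of R. -/

import Mathlib

open CategoryTheory IsLocalRing

noncomputable section

/-- The `i`-th Tor module of two `R`-modules, as an object of `ModuleCat R`. -/
def TorMod (R : Type) [CommRing R] (i : ℕ) (M N : ModuleCat.{0} R) : ModuleCat.{0} R :=
  ((Tor (ModuleCat.{0} R) i).obj M).obj N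

/-- The `i`-th Ext module of two `R`-modules, as an object of `ModuleCat R`. -/
def ExtMod (R : Type) [CommRing R] (i : ℕ) (M N : ModuleCat.{0} R) : ModuleCat.{0} R :=
  ((Ext R (ModuleCat.{0} R) i).obj (Opposite.op M)).obj N

/-- Integer-indexed Tor: `Tor_n = 0` for `n < 0`. -/
def TorZ (R : Type) [CommRing R] (n : ℤ) (M N : ModuleCat.{0} R) : ModuleCat.{0} R :=
  if 0 ≤ n then TorMod R n.toNat M N else ModuleCat.of R PUnit

/-- Integer-indexed Ext: `Ext^n = 0` for `n < 0`. -/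
def ExtZ (R : Type) [CommRing R] (n : ℤ) (M N : ModuleCat.{0} R) : ModuleCat.{0} R :=
  if 0 ≤ n then ExtMod R n.toNat M N else ModuleCat.of R PUnit

/-- The depth of a module `N` over a local ring `S`, defined as the infimum of the set of
integers `i` such that `Ext^i(k, N) ≠ 0`, where `k` is the residue field of `S`
(`⊤` if no such `i` exists). -/
def moduleDepth (S : Type) [CommRing S] [IsLocalRing S] (N : Type) [AddCommGroup N]
    [Module S N] : ℕ∞ :=
  sInf {i : ℕ∞ | ∃ j : ℕ, i = (j : ℕ∞) ∧
    Nontrivial (ExtMod S j (ModuleCat.of S (ResidueField S)) (ModuleCat.of S N))}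

/-- A local ring is regular if it is noetherian and its maximal ideal can be generated by
(Krull dimension of `S`)-many elements. -/
def IsRegularLocal (S : Type) [CommRing S] [IsLocalRing S] : Prop :=
  IsNoetherianRing S ∧ ∃ s : Finset S, Ideal.span (s : Set S) = maximalIdeal S ∧
    (s.card : WithBot ℕ∞) = ringKrullDim S

/-- A local ring is Cohen-Macaulay if its depth (as a module over itself) equals its
Krull dimension. -/
def IsCMLocalRing (R : Type) [CommRing R] [IsLocalRing R] : Prop :=
  (moduleDepth R R : WithBot ℕ∞) = ringKrullDim R

/-- A module `M` over a local ring `R` is maximal Cohen-Macaulay if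
`depth M_p ≥ dim R_p` for every prime ideal `p` of `R`. -/
def IsMCMModule (R : Type) [CommRing R] [IsLocalRing R] (M : Type) [AddCommGroup M]
    [Module R M] : Prop :=
  ∀ (p : Ideal R) [p.IsPrime],
    ringKrullDim (Localization.AtPrime p) ≤
      (moduleDepth (Localization.AtPrime p) (LocalizedModule p.primeCompl M) : WithBot ℕ∞)

/-- Membership in `CM(R)`: finitely generated maximal Cohen-Macaulay modules. -/
def MemCM (R : Type) [CommRing R] [IsLocalRing R] (M : ModuleCat.{0} R) : Prop :=
  Module.Finite R M ∧ IsMCMModule R M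

/-- Membership in `CM₀(R)`: finitely generated maximal Cohen-Macaulay modules that are
locally free on the punctured spectrum. -/
def MemCM0 (R : Type) [CommRing R] [IsLocalRing R] (M : ModuleCat.{0} R) : Prop :=
  Module.Finite R M ∧ IsMCMModule R M ∧
    ∀ (p : Ideal R) [p.IsPrime], p ≠ maximalIdeal R →
      Module.Free (Localization.AtPrime p) (LocalizedModule p.primeCompl M)

/-- The singular locus of `R`: primes `p` such that `R_p` is not regular. -/
def singularLocus (R : Type) [CommRing R] : Set (PrimeSpectrum R) :=
  {p | ¬ IsRegularLocal (Localization.AtPrime p.asIdeal)}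

/-- The nonfree locus of a module `M`: primes `p` such that `M_p` is not a free
`R_p`-module. -/
def nonfreeLocus (R : Type) [CommRing R] (M : Type) [AddCommGroup M] [Module R M] :
    Set (PrimeSpectrum R) :=
  {p | ¬ Module.Free (Localization.AtPrime p.asIdeal)
        (LocalizedModule p.asIdeal.primeCompl M)}

/-- `K` is a first syzygy of `N` in a minimal free resolution: there is a surjection
`f : R^n → N` with `ker f ⊆ m·R^n` and `K ≅ ker f`. -/
def IsMinimalSyzygy1 (R : Type) [CommRing R] [IsLocalRing R] (N K : ModuleCat.{0} R) : Prop :=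
  ∃ (n : ℕ) (f : (Fin n → R) →ₗ[R] N), Function.Surjective f ∧
    LinearMap.ker f ≤ (maximalIdeal R) • (⊤ : Submodule R (Fin n → R)) ∧
    Nonempty (K ≃ₗ[R] LinearMap.ker f)

/-- `K` is a `d`-th syzygy of `N` in a minimal free resolution. -/
def IsMinimalSyzygy (R : Type) [CommRing R] [IsLocalRing R] :
    ℕ → ModuleCat.{0} R → ModuleCat.{0} R → Prop
  | 0, N, K => Nonempty ((K : Type) ≃ₗ[R] N)
  | d + 1, N, K => ∃ L : ModuleCat.{0} R, IsMinimalSyzygy1 R N L ∧ IsMinimalSyzygy R d L K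

/-- A module is indecomposable if it is nonzero and is not isomorphic to the direct sum of
two nonzero modules. -/
def IndecomposableModule (R : Type) [CommRing R] (M : Type) [AddCommGroup M] [Module R M] :
    Prop :=
  Nontrivial M ∧ ∀ (A B : Type) [AddCommGroup A] [Module R A] [AddCommGroup B] [Module R B],
    Nonempty (M ≃ₗ[R] A × B) → (Subsingleton A ∨ Subsingleton B)

/-!
Let `a ∉ p` kill `Tor₁(M, N)` for all `M, N` in `CM₀(R)`, and let `d = dim R`. For `X = R / p` and
`Xₙ = X / mⁿ X`, the syzygies `Ω^d Xₙ` lie in `CM₀(R)`: their depth comes from dimension shifting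
along a free resolution, and they are free at `q ≠ m` because `(Xₙ)_q = 0`. Hence `a` kills
`Tor₁(Ω^d Xᵢ, Ω^d Xⱼ)`, which is `Tor₁(Xᵢ, Ω^{2d} Xⱼ)` up to shifting, and Krull's intersection
theorem in both variables shows that `a` kills `Tor₁(X, Ω^{2d} X)`. At `p` the element `a` is a
unit, so `Tor₁(κ(p), (Ω^{2d} X)_p) = 0`. Thus `(Ω^{2d} X)_p` is free, `κ(p)` has finite projective
dimension over `R_p`, and `R_p` is regular by Serre's theorem.
-/

open TensorProduct Function

universe u v w

section TorOne

variable {R : Type u} [CommRing R] {F G X Y : Type*} [AddCommGroup F] [AddCommGroup G]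
  [AddCommGroup X] [AddCommGroup Y] [Module R F] [Module R G] [Module R X] [Module R Y]

/-- The module `Tor₁(X, Y)` computed from a presentation `g : G → X`, namely the kernel of
`ker g ⊗ Y → G ⊗ Y`; it is the true `Tor₁` when `g` is surjective and `G` is flat. -/
def torOne (g : G →ₗ[R] X) (Y : Type*) [AddCommGroup Y] [Module R Y] :
    Submodule R (LinearMap.ker g ⊗[R] Y) :=
  LinearMap.ker ((LinearMap.ker g).subtype.rTensor Y)

lemma mem_torOne {g : G →ₗ[R] X} {t : LinearMap.ker g ⊗[R] Y} :
    t ∈ torOne g Y ↔ (LinearMap.ker g).subtype.rTensor Y t = 0 :=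
  Iff.rfl

lemma rTensor_lTensor_apply {A A' B B' : Type*} [AddCommGroup A] [AddCommGroup A']
    [AddCommGroup B] [AddCommGroup B'] [Module R A] [Module R A'] [Module R B] [Module R B']
    (α : A →ₗ[R] A') (β : B →ₗ[R] B') (t : A ⊗[R] B) :
    α.rTensor B' (β.lTensor A t) = β.lTensor A' (α.rTensor B t) := by
  rw [← LinearMap.comp_apply, ← LinearMap.comp_apply, LinearMap.rTensor_comp_lTensor,
    LinearMap.lTensor_comp_rTensor]

lemma annihilator_torOne_le [Module.Flat R F] {f : F →ₗ[R] Y} {g : G →ₗ[R] X}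
    (hf : Surjective f) (hg : Surjective g) :
    (torOne f X).annihilator ≤ (torOne g Y).annihilator := by
  intro a ha
  rw [Submodule.mem_annihilator] at ha ⊢
  intro t ht
  have exact_f := LinearMap.exact_subtype_ker_map f
  have exact_g := LinearMap.exact_subtype_ker_map g
  obtain ⟨s, rfl⟩ := LinearMap.lTensor_surjective (LinearMap.ker g) hf t
  rw [mem_torOne, rTensor_lTensor_apply] at ht
  obtain ⟨u, hu⟩ := (lTensor_exact G exact_f hf _).1 ht
  have image_mem : TensorProduct.comm R _ _ (g.rTensor (LinearMap.ker f) u) ∈ torOne f X := by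
    rw [mem_torOne, LinearMap.rTensor_comm, ← rTensor_lTensor_apply, hu,
      (rTensor_exact F exact_g hg).apply_apply_eq_zero, map_zero]
  have smul_image : g.rTensor (LinearMap.ker f) (a • u) = 0 := by
    simpa only [← map_smul, LinearEquiv.map_eq_zero_iff] using ha _ image_mem
  obtain ⟨w, hw⟩ := (rTensor_exact (LinearMap.ker f) exact_g hg _).1 smul_image
  have smul_eq : a • s = (LinearMap.ker f).subtype.lTensor (LinearMap.ker g) w := by
    apply Module.Flat.rTensor_preserves_injective_linearMap (M := F) _
      (LinearMap.ker g).subtype_injective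
    rw [rTensor_lTensor_apply, hw, map_smul, map_smul, hu]
  rw [← map_smul, smul_eq, (lTensor_exact _ exact_f hf).apply_apply_eq_zero]

lemma annihilator_torOne_comm [Module.Flat R F] [Module.Flat R G] {f : F →ₗ[R] Y} {g : G →ₗ[R] X}
    (hf : Surjective f) (hg : Surjective g) :
    (torOne f X).annihilator = (torOne g Y).annihilator :=
  le_antisymm (annihilator_torOne_le hf hg) (annihilator_torOne_le hg hf)

lemma map_comm_torOne_ker [Module.Flat R F] [Module.Flat R G] (f : F →ₗ[R] Y) (g : G →ₗ[R] X) :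
    (torOne g (LinearMap.ker f)).map (TensorProduct.comm R _ _).toLinearMap =
      torOne f (LinearMap.ker g) := by
  ext t
  obtain ⟨t, rfl⟩ := (TensorProduct.comm R (LinearMap.ker g) (LinearMap.ker f)).surjective t
  have injective_g := Module.Flat.rTensor_preserves_injective_linearMap (M := F) _
    (LinearMap.ker g).subtype_injective
  have injective_f := Module.Flat.lTensor_preserves_injective_linearMap (M := G) _
    (LinearMap.ker f).subtype_injective
  rw [Submodule.mem_map_equiv, LinearEquiv.symm_apply_apply, mem_torOne, mem_torOne,
    LinearMap.rTensor_comm, LinearEquiv.map_eq_zero_iff, ← map_eq_zero_iff _ injective_g,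
    ← map_eq_zero_iff _ injective_f, rTensor_lTensor_apply]

lemma annihilator_torOne_ker_comm [Module.Flat R F] [Module.Flat R G] (f : F →ₗ[R] Y)
    (g : G →ₗ[R] X) :
    (torOne g (LinearMap.ker f)).annihilator = (torOne f (LinearMap.ker g)).annihilator := by
  rw [← map_comm_torOne_ker f g]
  exact (LinearEquiv.submoduleMap _ _).annihilator_eq

lemma mem_smul_top_of_lTensor_mkQ_eq_zero (I : Ideal R) {t : X ⊗[R] Y}
    (ht : (I • (⊤ : Submodule R Y)).mkQ.lTensor X t = 0) :
    t ∈ I • (⊤ : Submodule R (X ⊗[R] Y)) := by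
  obtain ⟨s, rfl⟩ := (lTensor_exact X (LinearMap.exact_subtype_mkQ (I • (⊤ : Submodule R Y)))
    (Submodule.mkQ_surjective _) t).1 ht
  clear ht
  induction s with
  | zero => rw [map_zero]; exact zero_mem _
  | add s s' hs hs' => rw [map_add]; exact add_mem hs hs'
  | tmul x y =>
    have map_le : (I • (⊤ : Submodule R Y)).map (TensorProduct.mk R X Y x) ≤ I • ⊤ := by
      rw [Submodule.map_smul'']
      exact Submodule.smul_mono le_rfl le_top
    exact map_le (Submodule.mem_map_of_mem y.2)

lemma iInf_annihilator_torOne_le [IsLocalRing R] [IsNoetherianRing R] [Module.Finite R G]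
    [Module.Finite R Y] (g : G →ₗ[R] X) :
    ⨅ n : ℕ, (torOne g (Y ⧸ (maximalIdeal R ^ n • (⊤ : Submodule R Y)))).annihilator ≤
      (torOne g Y).annihilator := by
  intro a ha
  rw [Submodule.mem_annihilator]
  intro t ht
  have mem_pow (n : ℕ) :
      a • t ∈ maximalIdeal R ^ n • (⊤ : Submodule R (LinearMap.ker g ⊗[R] Y)) := by
    apply mem_smul_top_of_lTensor_mkQ_eq_zero
    rw [map_smul]
    refine Submodule.mem_annihilator.1 (Ideal.mem_iInf.1 ha n) _ ?_
    rw [mem_torOne, rTensor_lTensor_apply, mem_torOne.1 ht, map_zero]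
  rw [← Submodule.mem_bot R,
    ← Ideal.iInf_pow_smul_eq_bot_of_isLocalRing (maximalIdeal R) Ideal.IsPrime.ne_top']
  exact (Submodule.mem_iInf _).2 mem_pow

end TorOne

section Comparison

lemma exists_eq_smul_of_mem_annihilator_homology {R : Type u} [CommRing R]
    (S : ShortComplex (ModuleCat.{v} R)) {a : R} (ha : a ∈ Module.annihilator R S.homology)
    {x : S.X₂} (hx : S.g x = 0) : ∃ y, S.f y = a • x := by
  rw [S.moduleCatHomologyIso.toLinearEquiv.annihilator_eq, Module.mem_annihilator] at ha
  have smul_mem : a • (⟨x, hx⟩ : LinearMap.ker S.g.hom) ∈ LinearMap.range S.moduleCatToCycles :=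
    (Submodule.Quotient.mk_eq_zero _).1 (ha (Submodule.Quotient.mk ⟨x, hx⟩))
  obtain ⟨y, hy⟩ := smul_mem
  exact ⟨y, congrArg Subtype.val hy⟩

lemma mem_annihilator_torOne_of_exact {R : Type u} [CommRing R] {M N P₀ P₁ P₂ : Type*}
    [AddCommGroup M] [AddCommGroup N] [AddCommGroup P₀] [AddCommGroup P₁] [AddCommGroup P₂]
    [Module R M] [Module R N] [Module R P₀] [Module R P₁] [Module R P₂] {d₂ : P₂ →ₗ[R] P₁}
    {d₁ : P₁ →ₗ[R] P₀} {f : P₀ →ₗ[R] N} (hd : d₁ ∘ₗ d₂ = 0) (hf : Exact d₁ f) {a : R}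
    (ha : ∀ x, d₁.lTensor M x = 0 → ∃ y, d₂.lTensor M y = a • x) :
    a ∈ (torOne f M).annihilator := by
  rw [Submodule.mem_annihilator]
  intro t ht
  let d : P₁ →ₗ[R] LinearMap.ker f := d₁.codRestrict _ hf.apply_apply_eq_zero
  have d_surjective : Surjective d := fun z ↦
    let ⟨x, hx⟩ := (hf z).1 z.2
    ⟨x, Subtype.ext hx⟩
  have d_comp : d ∘ₗ d₂ = 0 := LinearMap.ext fun x ↦ Subtype.ext (LinearMap.congr_fun hd x)
  obtain ⟨t, rfl⟩ := (TensorProduct.comm R M (LinearMap.ker f)).surjective t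
  obtain ⟨x, rfl⟩ := LinearMap.lTensor_surjective M d_surjective t
  rw [mem_torOne, LinearMap.rTensor_comm, LinearEquiv.map_eq_zero_iff,
    ← LinearMap.lTensor_comp_apply] at ht
  obtain ⟨y, hy⟩ := ha x ht
  rw [← map_smul, ← map_smul, ← hy, ← LinearMap.lTensor_comp_apply, d_comp, LinearMap.lTensor_zero,
    LinearMap.zero_apply, map_zero]

lemma annihilator_torMod_one_le {R : Type} [CommRing R] (M N : ModuleCat.{0} R) {G : Type*}
    [AddCommGroup G] [Module R G] {g : G →ₗ[R] M} (hg : Surjective g) :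
    Module.annihilator R (TorMod R 1 M N) ≤ (torOne g N).annihilator := by
  intro a ha
  let P := projectiveResolution N
  let tensorM := (MonoidalCategory.tensoringLeft (ModuleCat.{0} R)).obj M
  let K := (tensorM.mapHomologicalComplex _).obj P.complex
  let e : TorMod R 1 M N ≅ (K.sc' 2 1 0).homology := P.isoLeftDerivedObj tensorM 1 ≪≫
    ShortComplex.homologyMapIso (K.isoSc' 2 1 0 (by simp) (by simp))
  rw [e.toLinearEquiv.annihilator_eq] at ha
  have projective : Module.Projective R (P.complex.X 0) :=
    (IsProjective.iff_projective _).2 (P.projective 0)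
  have exact₀ : Exact (P.complex.d 1 0).hom (P.π.f 0).hom :=
    (ShortComplex.ShortExact.moduleCat_exact_iff_function_exact _).1 P.exact₀
  refine annihilator_torOne_le ((ModuleCat.epi_iff_surjective (P.π.f 0)).1 inferInstance) hg ?_
  exact mem_annihilator_torOne_of_exact (ModuleCat.hom_ext_iff.1 (P.complex.d_comp_d 2 1 0)) exact₀
    fun x ↦ exists_eq_smul_of_mem_annihilator_homology _ ha

end Comparison

section ProjectiveDimension

variable {S : Type u} [CommRing S] {K F M : Type u} [AddCommGroup K] [Module S K]
  [AddCommGroup F] [Module S F] [AddCommGroup M] [Module S M] {j : K →ₗ[S] F} {f : F →ₗ[S] M}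

lemma shortExact_moduleCatMk (hj : Injective j) (hjf : Exact j f) (hf : Surjective f) :
    (ShortComplex.moduleCatMk j f hjf.linearMap_comp_eq_zero).ShortExact :=
  ModuleCat.shortComplex_shortExact _ hjf hj hf

lemma hasProjectiveDimensionLE_zero_iff :
    HasProjectiveDimensionLE (ModuleCat.of S M) 0 ↔ Module.Projective S M := by
  rw [← projective_iff_hasProjectiveDimensionLE_zero, IsProjective.iff_projective]

lemma hasProjectiveDimensionLE_succ_iff [Module.Projective S F] (hj : Injective j)
    (hjf : Exact j f) (hf : Surjective f) {n : ℕ} :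
    HasProjectiveDimensionLE (ModuleCat.of S M) (n + 1) ↔
      HasProjectiveDimensionLE (ModuleCat.of S K) n :=
  (shortExact_moduleCatMk hj hjf hf).hasProjectiveDimensionLT_X₃_iff n
    ((IsProjective.iff_projective F).1 inferInstance)

lemma hasProjectiveDimensionLE_succ_iff_ker [Module.Projective S F] (hf : Surjective f) {n : ℕ} :
    HasProjectiveDimensionLE (ModuleCat.of S M) (n + 1) ↔
      HasProjectiveDimensionLE (ModuleCat.of S (LinearMap.ker f)) n :=
  hasProjectiveDimensionLE_succ_iff (LinearMap.ker f).subtype_injective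
    (LinearMap.exact_subtype_ker_map f) hf

lemma lTensor_quotient_span_singleton_injective (hj : Injective j) (hjf : Exact j f) {x : S}
    (hx : IsSMulRegular M x) : Injective (j.lTensor (S ⧸ Ideal.span {x})) := by
  have exact_map := QuotSMulTop.map_first_exact_on_four_term_exact_of_isSMulRegular_last
    ((LinearMap.exact_zero_iff_injective PUnit.{1} j).2 hj) hjf hx
  rw [map_zero, LinearMap.exact_zero_iff_injective] at exact_map
  have square := QuotSMulTop.equivQuotTensor_naturality x j
  have injective_comp : Injective
      (j.lTensor (S ⧸ Ideal.span {x}) ∘ QuotSMulTop.equivQuotTensor x K) := by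
    rw [← LinearEquiv.coe_coe, ← LinearMap.coe_comp, ← square]
    exact (QuotSMulTop.equivQuotTensor x F).injective.comp exact_map
  exact (Injective.of_comp_iff' _ (QuotSMulTop.equivQuotTensor x K).bijective).1 injective_comp

lemma hasProjectiveDimensionLE_succ_quotient_tensor [Module.Projective S F] (hf : Surjective f)
    {x : S} (hx : IsSMulRegular M x) {n : ℕ}
    (h : HasProjectiveDimensionLE
      (ModuleCat.of (S ⧸ Ideal.span {x}) ((S ⧸ Ideal.span {x}) ⊗[S] LinearMap.ker f)) n) :
    HasProjectiveDimensionLE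
      (ModuleCat.of (S ⧸ Ideal.span {x}) ((S ⧸ Ideal.span {x}) ⊗[S] M)) (n + 1) := by
  have exact_f := LinearMap.exact_subtype_ker_map f
  exact (hasProjectiveDimensionLE_succ_iff
    (j := (LinearMap.ker f).subtype.baseChange (S ⧸ Ideal.span {x}))
    (f := f.baseChange (S ⧸ Ideal.span {x}))
    (lTensor_quotient_span_singleton_injective (LinearMap.ker f).subtype_injective exact_f hx)
    (lTensor_exact _ exact_f hf) (LinearMap.lTensor_surjective _ hf)).2 h

lemma hasProjectiveDimensionLE_quotient_tensor {x : S} (hx : x ∈ nonZeroDivisors S) (n : ℕ)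
    (hM : IsSMulRegular M x) (h : HasProjectiveDimensionLE (ModuleCat.of S M) n) :
    HasProjectiveDimensionLE
      (ModuleCat.of (S ⧸ Ideal.span {x}) ((S ⧸ Ideal.span {x}) ⊗[S] M)) n := by
  induction n generalizing M with
  | zero =>
    rw [hasProjectiveDimensionLE_zero_iff] at h ⊢
    infer_instance
  | succ n ih =>
    have surjective_cover := Finsupp.linearCombination_id_surjective S M
    have regular : IsSMulRegular (M →₀ S) x := Module.Flat.isSMulRegular_of_nonZeroDivisors hx
    exact hasProjectiveDimensionLE_succ_quotient_tensor surjective_cover hM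
      (ih (regular.submodule _ _) ((hasProjectiveDimensionLE_succ_iff_ker surjective_cover).1 h))

lemma free_of_hasProjectiveDimensionLE [IsLocalRing S] [IsNoetherianRing S]
    (hS : maximalIdeal S ∈ associatedPrimes S S) [Module.Finite S M] (n : ℕ)
    (h : HasProjectiveDimensionLE (ModuleCat.of S M) n) : Module.Free S M := by
  induction n generalizing M with
  | zero =>
    have := hasProjectiveDimensionLE_zero_iff.1 h
    exact Module.free_of_flat_of_isLocalRing
  | succ n ih =>
    obtain ⟨r, f, f_surjective⟩ := Module.Finite.exists_fin' S M
    have ker_free := ih ((hasProjectiveDimensionLE_succ_iff_ker f_surjective).1 h)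
    refine Module.free_of_lTensor_residueField_injective (LinearMap.ker f).subtype f f_surjective
      (LinearMap.exact_subtype_ker_map f) ?_
    -- The socle embeds the residue field `k` into `S`, so `k ⊗ ker f → k ⊗ Sʳ` is injective
    -- because `ker f → Sʳ` is.
    obtain ⟨-, ι, ι_injective⟩ := (isAssociatedPrime_iff_exists_injective_linearMap _ _).1 hS
    have comp_injective : Injective
        (ι.rTensor (Fin r → S) ∘ₗ (LinearMap.ker f).subtype.lTensor (S ⧸ maximalIdeal S)) := by
      rw [LinearMap.rTensor_comp_lTensor, ← LinearMap.lTensor_comp_rTensor, LinearMap.coe_comp]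
      exact (Module.Flat.lTensor_preserves_injective_linearMap _
        (LinearMap.ker f).subtype_injective).comp
          (Module.Flat.rTensor_preserves_injective_linearMap _ ι_injective)
    exact Injective.of_comp comp_injective

end ProjectiveDimension

section Serre

variable {S : Type u} [CommRing S] [IsLocalRing S]

lemma maximalIdeal_mem_associatedPrimes_of_eq_bot [IsNoetherianRing S]
    (hS : maximalIdeal S = ⊥) : maximalIdeal S ∈ associatedPrimes S S := by
  obtain ⟨P, hP⟩ := associatedPrimes.nonempty S S
  have P_eq_bot : P = ⊥ := eq_bot_iff.2 (hS ▸ le_maximalIdeal hP.1.ne_top)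
  rwa [P_eq_bot, ← hS] at hP

lemma exists_mem_nonZeroDivisors_notMem_sq [IsNoetherianRing S]
    (hS : maximalIdeal S ∉ associatedPrimes S S) :
    ∃ x ∈ maximalIdeal S, x ∉ maximalIdeal S ^ 2 ∧ x ∈ nonZeroDivisors S := by
  classical
  by_contra! h
  have finite_ass := associatedPrimes.finite S S
  have covered : (maximalIdeal S : Set S) ⊆
      ⋃ I ∈ (insert (maximalIdeal S ^ 2) finite_ass.toFinset : Finset (Ideal S)), (I : Set S) := by
    intro x hx
    by_cases hx2 : x ∈ maximalIdeal S ^ 2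
    · exact Set.mem_biUnion (Finset.mem_insert_self _ _) hx2
    · have hx0 : x ∈ (nonZeroDivisors S : Set S)ᶜ := h x hx hx2
      rw [← biUnion_associatedPrimes_eq_compl_nonZeroDivisors, Set.mem_iUnion₂] at hx0
      obtain ⟨P, hP, hxP⟩ := hx0
      exact Set.mem_biUnion (Finset.mem_insert_of_mem (finite_ass.mem_toFinset.2 hP)) hxP
  obtain ⟨P, hP, le_P⟩ := (Ideal.subset_union_prime (f := id) (maximalIdeal S ^ 2)
    (maximalIdeal S ^ 2) fun P hP hP2 _ ↦
      (finite_ass.mem_toFinset.1 (Finset.mem_of_mem_insert_of_ne hP hP2)).1).1 covered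
  obtain rfl | hP := Finset.mem_insert.1 hP
  · refine hS (maximalIdeal_mem_associatedPrimes_of_eq_bot ?_)
    exact Submodule.eq_bot_of_le_smul_of_le_jacobson_bot _ _ (IsNoetherian.noetherian _)
      (by simpa only [id, pow_two, smul_eq_mul] using le_P) (maximalIdeal_le_jacobson _)
  · have P_mem := finite_ass.mem_toFinset.1 hP
    exact hS (le_antisymm (le_maximalIdeal P_mem.1.ne_top) le_P ▸ P_mem)

lemma nonempty_retract_residueField {M : Type u} [AddCommGroup M] [Module S M] {t : M}
    (ht : ∀ y ∈ maximalIdeal S, y • t = 0) {φ : M →ₗ[S] ResidueField S} (hφ : φ t = 1) :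
    Nonempty (Retract (ModuleCat.of S (ResidueField S)) (ModuleCat.of S M)) := by
  let i : ResidueField S →ₗ[S] M :=
    Submodule.liftQ (maximalIdeal S) (LinearMap.toSpanSingleton S M t) ht
  refine ⟨⟨ModuleCat.ofHom i, ModuleCat.ofHom φ, ?_⟩⟩
  rw [← ModuleCat.ofHom_comp, ← ModuleCat.ofHom_id]
  congr 1
  refine Submodule.linearMap_qext _ (LinearMap.ext_ring ?_)
  change φ ((1 : S) • t) = 1
  rw [one_smul, hφ]

lemma exists_linearMap_residueField_eq_one {x : S} (hx : x ∈ maximalIdeal S)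
    (hx2 : x ∉ maximalIdeal S ^ 2) :
    ∃ φ : maximalIdeal S →ₗ[S] ResidueField S, φ ⟨x, hx⟩ = 1 := by
  obtain ⟨ψ, hψ⟩ := Module.Projective.exists_dual_eq_one (ResidueField S)
    (x := (maximalIdeal S).toCotangent ⟨x, hx⟩) (by rwa [Ne, Ideal.toCotangent_eq_zero])
  exact ⟨ψ.restrictScalars S ∘ₗ (maximalIdeal S).toCotangent, hψ⟩

lemma nonempty_retract_residueField_quotient {x : S} (hx : x ∈ maximalIdeal S)
    (hx2 : x ∉ maximalIdeal S ^ 2) [IsLocalRing (S ⧸ Ideal.span {x})] :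
    Nonempty (Retract
      (ModuleCat.of (S ⧸ Ideal.span {x}) (ResidueField (S ⧸ Ideal.span {x})))
      (ModuleCat.of (S ⧸ Ideal.span {x}) ((S ⧸ Ideal.span {x}) ⊗[S] maximalIdeal S))) := by
  have : IsLocalHom (algebraMap S (S ⧸ Ideal.span {x})) :=
    IsLocalHom.of_surjective _ Ideal.Quotient.mk_surjective
  obtain ⟨φ, hφ⟩ := exists_linearMap_residueField_eq_one hx hx2
  let ψ : maximalIdeal S →ₗ[S] ResidueField (S ⧸ Ideal.span {x}) :=
    (Algebra.linearMap (ResidueField S) _).restrictScalars S ∘ₗ φ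
  have smul_eq_zero (y : S ⧸ Ideal.span {x}) (hy : y ∈ maximalIdeal (S ⧸ Ideal.span {x})) :
      y • (1 : S ⧸ Ideal.span {x}) ⊗ₜ[S] (⟨x, hx⟩ : maximalIdeal S) = 0 := by
    obtain ⟨y, rfl⟩ := Ideal.Quotient.mk_surjective y
    have hyS : y ∈ maximalIdeal S := (mem_maximalIdeal y).2 fun unit ↦ hy (unit.map _)
    have x_smul_one : x • (1 : S ⧸ Ideal.span {x}) = 0 := by
      rw [Algebra.smul_def, mul_one]
      exact Ideal.Quotient.eq_zero_iff_mem.2 (Ideal.mem_span_singleton_self x)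
    calc Ideal.Quotient.mk _ y • (1 : S ⧸ Ideal.span {x}) ⊗ₜ[S] (⟨x, hx⟩ : maximalIdeal S)
        = y • ((1 : S ⧸ Ideal.span {x}) ⊗ₜ[S] (⟨x, hx⟩ : maximalIdeal S)) :=
          algebraMap_smul (S ⧸ Ideal.span {x}) y _
      _ = 1 ⊗ₜ[S] (x • ⟨y, hyS⟩) := by
          rw [← TensorProduct.tmul_smul]
          exact congrArg _ (Subtype.ext (mul_comm y x))
      _ = 0 := by rw [← TensorProduct.smul_tmul, x_smul_one, TensorProduct.zero_tmul]
  refine nonempty_retract_residueField smul_eq_zero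
    (φ := LinearMap.liftBaseChange (S ⧸ Ideal.span {x}) ψ) ?_
  rw [LinearMap.liftBaseChange_tmul, one_smul]
  exact (congrArg _ hφ).trans (map_one (algebraMap (ResidueField S) _))

lemma spanFinrank_le_spanFinrank_map_quotient_add_one {A : Type*} [CommRing A] {I : Ideal A}
    {x : A} (hx : x ∈ I) (hI : (I.map (Ideal.Quotient.mk (Ideal.span {x}))).FG) :
    I.spanFinrank ≤ (I.map (Ideal.Quotient.mk (Ideal.span {x}))).spanFinrank + 1 := by
  classical
  obtain ⟨t, card_t, span_t⟩ := Submodule.FG.exists_span_finset_card_eq_spanFinrank hI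
  let lift := surjInv (Ideal.Quotient.mk_surjective (I := Ideal.span {x}))
  have map_span : (Ideal.span (lift '' t)).map (Ideal.Quotient.mk (Ideal.span {x})) =
      I.map (Ideal.Quotient.mk (Ideal.span {x})) := by
    rw [Ideal.map_span, Set.image_image, Set.image_congr fun y _ ↦ surjInv_eq _ y, Set.image_id']
    exact span_t
  have span_eq : Ideal.span ((insert x (t.image lift) : Finset A) : Set A) = I := by
    rw [Finset.coe_insert, Finset.coe_image, Ideal.span_insert, ← Ideal.comap_map_quotientMk,
      map_span, Ideal.comap_map_quotientMk, sup_eq_right, Ideal.span_singleton_le_iff_mem]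
    exact hx
  calc I.spanFinrank ≤ (insert x (t.image lift)).card := by
        rw [← span_eq, ← Set.ncard_coe_finset]
        exact Submodule.spanFinrank_span_le_ncard_of_finite (Finset.finite_toSet _)
    _ ≤ t.card + 1 := (Finset.card_insert_le _ _).trans (by gcongr; exact Finset.card_image_le)
    _ = _ := by rw [card_t]

lemma isRegularLocalRing_of_quotient_span_singleton [IsNoetherianRing S] {x : S}
    (hx : x ∈ maximalIdeal S) (hx0 : x ∈ nonZeroDivisors S)
    (h : IsRegularLocalRing (S ⧸ Ideal.span {x})) : IsRegularLocalRing S := by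
  apply IsRegularLocalRing.of_spanFinrank_maximalIdeal_le
  rw [← ringKrullDim_quotient_span_singleton_succ_eq_ringKrullDim_of_mem_nonZeroDivisors hx0 hx,
    ← h.spanFinrank_maximalIdeal, ← map_maximalIdeal_of_surjective
      (Ideal.Quotient.mk (Ideal.span {x})) Ideal.Quotient.mk_surjective]
  exact_mod_cast spanFinrank_le_spanFinrank_map_quotient_add_one hx (IsNoetherian.noetherian _)

lemma isRegularLocalRing_of_maximalIdeal_mem_associatedPrimes [IsNoetherianRing S]
    (hS : maximalIdeal S ∈ associatedPrimes S S) {n : ℕ}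
    (h : HasProjectiveDimensionLE (ModuleCat.of S (ResidueField S)) n) :
    IsRegularLocalRing S := by
  have free : Module.Free S (S ⧸ maximalIdeal S) := free_of_hasProjectiveDimensionLE hS n h
  have maximalIdeal_eq_bot : maximalIdeal S = ⊥ := by
    rw [← Ideal.annihilator_quotient (I := maximalIdeal S)]
    exact Module.annihilator_eq_bot.2 inferInstance
  apply IsRegularLocalRing.of_spanFinrank_maximalIdeal_le
  rw [maximalIdeal_eq_bot, Submodule.spanFinrank_bot]
  exact ringKrullDim_nonneg_of_nontrivial

lemma hasProjectiveDimensionLE_maximalIdeal {n : ℕ}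
    (h : HasProjectiveDimensionLE (ModuleCat.of S (ResidueField S)) n) :
    HasProjectiveDimensionLE (ModuleCat.of S (maximalIdeal S)) n :=
  (hasProjectiveDimensionLE_succ_iff (maximalIdeal S).subtype_injective
    (LinearMap.exact_subtype_mkQ _) (maximalIdeal S).mkQ_surjective).1
    (hasProjectiveDimensionLT_of_ge (ModuleCat.of S (ResidueField S)) (n + 1) (n + 2) (by lia))

lemma exists_ringKrullDim_eq_natCast (S : Type*) [CommRing S] [IsLocalRing S]
    [IsNoetherianRing S] : ∃ d : ℕ, ringKrullDim S = d := by
  obtain ⟨d, hd⟩ := WithBot.ne_bot_iff_exists.1 (ringKrullDim_ne_bot (R := S))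
  have d_ne_top : d ≠ ⊤ := fun h ↦ ringKrullDim_ne_top (R := S) (by rw [← hd, h]; rfl)
  obtain ⟨d, rfl⟩ := ENat.ne_top_iff_exists.1 d_ne_top
  exact ⟨d, hd.symm⟩

theorem isRegularLocalRing_of_hasProjectiveDimensionLE [IsNoetherianRing S] {n : ℕ}
    (h : HasProjectiveDimensionLE (ModuleCat.of S (ResidueField S)) n) :
    IsRegularLocalRing S := by
  obtain ⟨d, hd⟩ : ∃ d : ℕ, ringKrullDim S < d := by
    obtain ⟨d, dim_eq⟩ := exists_ringKrullDim_eq_natCast S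
    exact ⟨d + 1, dim_eq ▸ by exact_mod_cast d.lt_succ_self⟩
  induction d generalizing S with
  | zero => exact absurd hd (not_lt.2 ringKrullDim_nonneg_of_nontrivial)
  | succ d ih =>
    by_cases hS : maximalIdeal S ∈ associatedPrimes S S
    · exact isRegularLocalRing_of_maximalIdeal_mem_associatedPrimes hS h
    obtain ⟨x, hx, hx2, hx0⟩ := exists_mem_nonZeroDivisors_notMem_sq hS
    have : Nontrivial (S ⧸ Ideal.span {x}) := Ideal.Quotient.nontrivial_iff.2
      (Ideal.span_singleton_eq_top.not.2 hx)
    have : IsLocalRing (S ⧸ Ideal.span {x}) :=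
      IsLocalRing.of_surjective' (Ideal.Quotient.mk _) Ideal.Quotient.mk_surjective
    obtain ⟨retract⟩ := nonempty_retract_residueField_quotient hx hx2
    have pd_tensor := hasProjectiveDimensionLE_quotient_tensor hx0 n
      ((Module.Flat.isSMulRegular_of_nonZeroDivisors hx0).submodule (maximalIdeal S) x)
      (hasProjectiveDimensionLE_maximalIdeal h)
    refine isRegularLocalRing_of_quotient_span_singleton hx hx0
      (ih (retract.hasProjectiveDimensionLT _) ?_)
    rw [← ringKrullDim_quotient_span_singleton_succ_eq_ringKrullDim_of_mem_nonZeroDivisors hx0 hx,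
      Nat.cast_succ] at hd
    exact lt_of_add_lt_add_right hd

end Serre

section ExtVanishing

open Abelian

variable {C : Type u} [Category.{v} C] [Abelian C] [HasExt.{w} C] {S : ShortComplex C}
  {X X' Y Y' : C} {n : ℕ}

lemma subsingleton_ext_congr_left (e : X ≅ X') :
    Subsingleton (Ext X Y n) ↔ Subsingleton (Ext X' Y n) :=
  (((extFunctor n).mapIso e.op).app Y).addCommGroupIsoToAddEquiv.symm.subsingleton_congr

lemma subsingleton_ext_congr_right (e : Y ≅ Y') :
    Subsingleton (Ext X Y n) ↔ Subsingleton (Ext X Y' n) :=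
  ((extFunctorObj X n).mapIso e).addCommGroupIsoToAddEquiv.subsingleton_congr

lemma subsingleton_ext_of_isZero_left (hX : Limits.IsZero X) : Subsingleton (Ext X Y n) :=
  AddCommGrpCat.subsingleton_of_isZero (((extFunctor n).map_isZero hX.op).obj Y)

lemma subsingleton_ext_of_isZero_right (hY : Limits.IsZero Y) : Subsingleton (Ext X Y n) :=
  AddCommGrpCat.subsingleton_of_isZero ((extFunctorObj X n).map_isZero hY)

lemma subsingleton_ext_X₂_left (hS : S.ShortExact) (h₁ : Subsingleton (Ext S.X₁ Y n))
    (h₃ : Subsingleton (Ext S.X₃ Y n)) : Subsingleton (Ext S.X₂ Y n) := by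
  refine subsingleton_of_forall_eq 0 fun y ↦ ?_
  obtain ⟨z, rfl⟩ := Ext.contravariant_sequence_exact₂ hS Y y (Subsingleton.elim _ _)
  rw [Subsingleton.elim z 0, Ext.comp_zero]

lemma subsingleton_ext_X₂_right (hS : S.ShortExact) (h₁ : Subsingleton (Ext X S.X₁ n))
    (h₃ : Subsingleton (Ext X S.X₃ n)) : Subsingleton (Ext X S.X₂ n) := by
  refine subsingleton_of_forall_eq 0 fun y ↦ ?_
  obtain ⟨z, rfl⟩ := Ext.covariant_sequence_exact₂ X hS y (Subsingleton.elim _ _)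
  rw [Subsingleton.elim z 0, Ext.zero_comp]

lemma subsingleton_ext_X₁_right (hS : S.ShortExact) (h₂ : Subsingleton (Ext X S.X₂ n))
    (h₃ : ∀ m, m + 1 = n → Subsingleton (Ext X S.X₃ m)) : Subsingleton (Ext X S.X₁ n) := by
  cases n with
  | zero =>
    have hom_X₂ : Subsingleton (X ⟶ S.X₂) := Ext.addEquiv₀.subsingleton_congr.1 h₂
    have := hS.mono_f
    exact Ext.addEquiv₀.subsingleton_congr.2
      ⟨fun a b ↦ (cancel_mono S.f).1 (Subsingleton.elim _ _)⟩
  | succ m =>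
    have := h₃ m rfl
    refine subsingleton_of_forall_eq 0 fun y ↦ ?_
    obtain ⟨z, rfl⟩ := Ext.covariant_sequence_exact₁ X hS y (Subsingleton.elim _ _) rfl
    rw [Subsingleton.elim z 0, Ext.zero_comp]

end ExtVanishing

section ExtModules

open Abelian

variable {R : Type u} [CommRing R]

lemma subsingleton_ext_pi_fin {X : ModuleCat.{u} R} {j : ℕ}
    (h : Subsingleton (Ext X (ModuleCat.of R R) j)) (n : ℕ) :
    Subsingleton (Ext X (ModuleCat.of R (Fin n → R)) j) := by
  induction n with
  | zero => exact subsingleton_ext_of_isZero_right (ModuleCat.isZero_of_subsingleton _)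
  | succ n ih =>
    let ι := LinearMap.single R (fun _ : Fin (n + 1) ↦ R) 0
    let π := LinearMap.funLeft R R (Fin.succ : Fin n → Fin (n + 1))
    have exact_ι_π : Exact ι π := by
      intro y
      refine ⟨fun hy ↦ ⟨y 0, funext fun i ↦ ?_⟩, ?_⟩
      · cases i using Fin.cases with
        | zero => exact Pi.single_eq_same (M := fun _ : Fin (n + 1) ↦ R) 0 _
        | succ i =>
          exact (Pi.single_eq_of_ne (M := fun _ ↦ R) i.succ_ne_zero (y 0)).trans
            (congrFun hy i).symm
      · rintro ⟨x, rfl⟩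
        exact funext fun i ↦ Pi.single_eq_of_ne (M := fun _ ↦ R) i.succ_ne_zero x
    exact subsingleton_ext_X₂_right (shortExact_moduleCatMk
      (Pi.single_injective (M := fun _ : Fin (n + 1) ↦ R) 0) exact_ι_π
      (LinearMap.funLeft_surjective_of_injective R R _ (Fin.succ_injective n))) h ih

lemma subsingleton_ext_of_free {X : ModuleCat.{u} R} {j : ℕ}
    (h : Subsingleton (Ext X (ModuleCat.of R R) j)) (F : Type u) [AddCommGroup F] [Module R F]
    [Module.Free R F] [Module.Finite R F] : Subsingleton (Ext X (ModuleCat.of R F) j) := by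
  let b := (Module.Free.chooseBasis R F).reindex (Fintype.equivFin _)
  exact (subsingleton_ext_congr_right b.equivFun.toModuleIso).2 (subsingleton_ext_pi_fin h _)

lemma subsingleton_ext_of_forall_prime [IsNoetherianRing R] (Y : ModuleCat.{u} R) (j : ℕ)
    (N : Type u) [AddCommGroup N] [Module R N] [Module.Finite R N]
    (h : ∀ P : PrimeSpectrum R, Module.annihilator R N ≤ P.asIdeal →
      Subsingleton (Ext (ModuleCat.of R (R ⧸ P.asIdeal)) Y j)) :
    Subsingleton (Ext (ModuleCat.of R N) Y j) := by
  induction ‹Module.Finite R N› using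
    IsNoetherianRing.induction_on_isQuotientEquivQuotientPrime R with
  | subsingleton N => exact subsingleton_ext_of_isZero_left (ModuleCat.isZero_of_subsingleton _)
  | quotient N P e =>
    refine (subsingleton_ext_congr_left e.toModuleIso).2 (h P ?_)
    rw [e.annihilator_eq, Ideal.annihilator_quotient]
  | exact N₁ N₂ N₃ f g hf hg hfg h₁ h₃ =>
    exact subsingleton_ext_X₂_left (shortExact_moduleCatMk hf hfg hg)
      (h₁ fun P hP ↦ h P ((f.annihilator_le_of_injective hf).trans hP))
      (h₃ fun P hP ↦ h P ((g.annihilator_le_of_surjective hg).trans hP))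

variable [IsNoetherianRing R] [IsLocalRing R]

lemma subsingleton_ext_of_isSMulRegular {M Y : ModuleCat.{u} R} [Module.Finite R M]
    [Module.Finite R Y] {x : R} (hx : x ∈ maximalIdeal R) (hM : IsSMulRegular M x) {j : ℕ}
    (h : Subsingleton (Ext (ModuleCat.of R (QuotSMulTop x M)) Y (j + 1))) :
    Subsingleton (Ext M Y j) := by
  have smul_surjective (y : Ext M Y j) : ∃ z : Ext M Y j, x • z = y := by
    obtain ⟨z, hz⟩ : ∃ z : Ext M Y j, (Ext.mk₀ (x • 𝟙 M)).comp z (zero_add j) = y :=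
      Ext.contravariant_sequence_exact₁ hM.smulShortComplex_shortExact Y y (add_comm 1 j)
        (h.elim _ _)
    rw [Ext.mk₀_smul, Ext.smul_comp, Ext.mk₀_id_comp] at hz
    exact ⟨z, hz⟩
  refine (Submodule.subsingleton_iff R).1 (subsingleton_of_bot_eq_top (Eq.symm ?_))
  refine Submodule.eq_bot_of_le_smul_of_le_jacobson_bot (maximalIdeal R) _
    (Module.finite_def.1 inferInstance) (fun y _ ↦ ?_) (maximalIdeal_le_jacobson _)
  obtain ⟨z, rfl⟩ := smul_surjective y
  exact Submodule.smul_mem_smul hx trivial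

lemma lt_of_annihilator_quotSMulTop_le {R : Type*} [CommRing R] {P Q : PrimeSpectrum R} {x : R}
    (hx : x ∉ P.asIdeal)
    (h : Module.annihilator R (QuotSMulTop x (R ⧸ P.asIdeal)) ≤ Q.asIdeal) : P < Q := by
  have le : P.asIdeal ≤ Q.asIdeal := calc
    P.asIdeal = Module.annihilator R (R ⧸ P.asIdeal) := Ideal.annihilator_quotient.symm
    _ ≤ Module.annihilator R (QuotSMulTop x (R ⧸ P.asIdeal)) :=
      LinearMap.annihilator_le_of_surjective _ (Submodule.mkQ_surjective _)
    _ ≤ Q.asIdeal := h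
  have hxQ : x ∈ Q.asIdeal := h (Module.mem_annihilator.2 fun v ↦ by
    obtain ⟨v, rfl⟩ := Submodule.mkQ_surjective _ v
    rw [← map_smul]
    exact (Submodule.Quotient.mk_eq_zero _).2 (Submodule.smul_mem_pointwise_smul v x ⊤ trivial))
  exact lt_of_le_of_ne le fun h ↦ hx (h ▸ hxQ)

/-- A case of Ischebeck's theorem. -/
lemma subsingleton_ext_quotient_prime {Y : ModuleCat.{u} R} [Module.Finite R Y] {d : ℕ}
    (hd : ∀ j < d, Subsingleton (Ext (ModuleCat.of R (ResidueField R)) Y j)) {e : ℕ}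
    {P : PrimeSpectrum R} (hP : Order.coheight P ≤ e) {j : ℕ} (hj : j + e < d) :
    Subsingleton (Ext (ModuleCat.of R (R ⧸ P.asIdeal)) Y j) := by
  induction e generalizing P j with
  | zero =>
    have P_isMax : IsMax P := Order.coheight_eq_zero.1 (nonpos_iff_eq_zero.1 (by simpa using hP))
    have P_eq : P = closedPoint R := P_isMax.eq_of_le (le_maximalIdeal P.2.ne_top)
    exact P_eq ▸ hd j hj
  | succ e ih =>
    by_cases hPm : P.asIdeal = maximalIdeal R
    · exact hPm ▸ hd j (by lia)
    obtain ⟨x, hxm, hxP⟩ : ∃ x ∈ maximalIdeal R, x ∉ P.asIdeal :=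
      SetLike.exists_of_lt (lt_of_le_of_ne (le_maximalIdeal P.2.ne_top) hPm)
    have regular : IsSMulRegular (R ⧸ P.asIdeal) x := by
      rw [← isSMulRegular_map (Ideal.Quotient.mk P.asIdeal) fun _ ↦ rfl]
      exact (IsRegular.of_ne_zero (Ideal.Quotient.eq_zero_iff_mem.not.2 hxP)).left.isSMulRegular
    refine subsingleton_ext_of_isSMulRegular hxm regular
      (subsingleton_ext_of_forall_prime _ _ _ fun Q hQ ↦ ih ?_ (by lia))
    have := (Order.coheight_add_one_le (lt_of_annihilator_quotSMulTop_le hxP hQ)).trans hP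
    exact (ENat.add_le_add_iff_right ENat.one_ne_top).1 (by exact_mod_cast this)

end ExtModules

section Depth

open Abelian

lemma exactAt_zero_linearYonedaObj_iff {R : Type u} [CommRing R] {M : ModuleCat.{u} R}
    (P : ProjectiveResolution M) (N : ModuleCat.{u} R) :
    (P.complex.linearYonedaObj R N).ExactAt 0 ↔ Subsingleton (Ext M N 0) := by
  let K := P.complex.linearYonedaObj R N
  have incoming_eq_zero : (K.sc' 0 0 1).f = 0 := K.shape _ _ (by simp)
  rw [HomologicalComplex.exactAt_iff' _ 0 0 1 (by simp) (by simp), ShortComplex.moduleCat_exact_iff]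
  constructor
  · intro h
    refine subsingleton_of_forall_eq 0 fun α ↦ ?_
    obtain ⟨f, hf, rfl⟩ := P.extMk_surjective α 1 rfl
    obtain ⟨g, hg⟩ := h f hf
    have f_eq_zero : f = 0 := hg.symm.trans (by rw [incoming_eq_zero]; rfl)
    simp [f_eq_zero]
  · intro h f hf
    have hom_subsingleton : Subsingleton (M ⟶ N) := Ext.addEquiv₀.symm.subsingleton
    have f_eq_zero : (f : P.complex.X 0 ⟶ N) = 0 := by
      rw [← P.exact₀.g_desc (A := N) f hf]
      exact (congrArg _ (hom_subsingleton.elim (P.exact₀.desc (A := N) f hf) 0)).trans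
        Limits.comp_zero
    exact ⟨0, by rw [map_zero]; exact f_eq_zero.symm⟩

lemma exactAt_succ_linearYonedaObj_iff {R : Type u} [CommRing R] {M : ModuleCat.{u} R}
    (P : ProjectiveResolution M) (N : ModuleCat.{u} R) (j : ℕ) :
    (P.complex.linearYonedaObj R N).ExactAt (j + 1) ↔ Subsingleton (Ext M N (j + 1)) := by
  rw [HomologicalComplex.exactAt_iff' _ j (j + 1) (j + 2) (by simp) (by simp),
    ShortComplex.moduleCat_exact_iff]
  constructor
  · intro h
    refine subsingleton_of_forall_eq 0 fun α ↦ ?_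
    obtain ⟨f, hf, rfl⟩ := P.extMk_surjective α (j + 2) rfl
    exact (P.extMk_eq_zero_iff f (j + 2) rfl hf j rfl).2 (h f hf)
  · intro h f hf
    exact (P.extMk_eq_zero_iff f (j + 2) rfl hf j rfl).1 (Subsingleton.elim _ _)

lemma subsingleton_extMod_iff {R : Type} [CommRing R] {M N : ModuleCat.{0} R} {j : ℕ} :
    Subsingleton (ExtMod R j M N) ↔ Subsingleton (Ext M N j) := by
  let P := projectiveResolution M
  have iso : ExtMod R j M N ≅ (P.complex.linearYonedaObj R N).homology j := P.isoExt j N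
  rw [← ModuleCat.isZero_iff_subsingleton, iso.isZero_iff,
    ← HomologicalComplex.exactAt_iff_isZero_homology]
  cases j with
  | zero => exact exactAt_zero_linearYonedaObj_iff P N
  | succ j => exact exactAt_succ_linearYonedaObj_iff P N j

lemma natCast_le_moduleDepth_iff {S : Type} [CommRing S] [IsLocalRing S] {N : Type}
    [AddCommGroup N] [Module S N] {n : ℕ} : (n : ℕ∞) ≤ moduleDepth S N ↔
      ∀ j < n, Subsingleton (Ext (ModuleCat.of S (ResidueField S)) (ModuleCat.of S N) j) := by
  constructor
  · intro h j hj
    by_contra ext_ne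
    rw [← subsingleton_extMod_iff, not_subsingleton_iff_nontrivial] at ext_ne
    have n_le_j : (n : ℕ∞) ≤ j := h.trans (sInf_le ⟨j, rfl, ext_ne⟩)
    exact hj.not_ge (by exact_mod_cast n_le_j)
  · intro h
    refine le_sInf ?_
    rintro _ ⟨j, rfl, ext_nontrivial⟩
    by_contra! j_lt_n
    have ext_subsingleton := subsingleton_extMod_iff.2 (h j (by exact_mod_cast j_lt_n))
    exact not_subsingleton_iff_nontrivial.2 ext_nontrivial ext_subsingleton

end Depth

section CohenMacaulay

open Abelian

lemma support_quotient_eq_zeroLocus {R : Type*} [CommRing R] (I : Ideal R) :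
    Module.support R (R ⧸ I) = PrimeSpectrum.zeroLocus I := by
  rw [Module.support_eq_zeroLocus, Ideal.annihilator_quotient]

lemma subsingleton_ext_residueField_localization {R : Type u} [CommRing R] [IsNoetherianRing R]
    (q : Ideal R) [q.IsPrime] {n : ℕ}
    (h : ∀ j < n, Subsingleton (Ext (ModuleCat.of R (R ⧸ q)) (ModuleCat.of R R) j)) :
    ∀ j < n, Subsingleton (Ext (ModuleCat.of (Localization.AtPrime q)
      (ResidueField (Localization.AtPrime q))) (ModuleCat.of _ (Localization.AtPrime q)) j) := by
  have smul_top_lt {A : Type u} [CommRing A] (I : Ideal A) [I.IsPrime] :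
      I • (⊤ : Submodule A A) < ⊤ := by
    rw [smul_eq_mul, Ideal.mul_top]
    exact Ideal.IsPrime.ne_top'.lt_top
  obtain ⟨rs, rfl, rs_mem, regular⟩ := ModuleCat.exists_isRegular_of_exists_subsingleton_ext q n
    (ModuleCat.of R R) (smul_top_lt q) (ModuleCat.of R (R ⧸ q)) (support_quotient_eq_zeroLocus q) h
  have regular_map := RingTheory.Sequence.IsWeaklyRegular.isRegular_of_isLocalization_of_mem
    (Localization.AtPrime q) q regular.toIsWeaklyRegular rs_mem
  have ext_vanishing := ModuleCat.subsingleton_ext_of_exists_isRegular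
    (maximalIdeal (Localization.AtPrime q))
    (ModuleCat.of _ (Localization.AtPrime q ⧸ maximalIdeal (Localization.AtPrime q)))
    (support_quotient_eq_zeroLocus _).le (ModuleCat.of _ (Localization.AtPrime q)) (smul_top_lt _)
    _ (fun r hr ↦ ?_) regular_map
  · rwa [List.length_map] at ext_vanishing
  · obtain ⟨s, hs, rfl⟩ := List.mem_map.1 hr
    exact (IsLocalization.AtPrime.to_map_mem_maximal_iff _ q s).2 (rs_mem s hs)

lemma exists_height_add_coheight_le {R : Type*} [CommRing R] {d : ℕ} (hd : ringKrullDim R = d)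
    (P : PrimeSpectrum R) :
    ∃ n e : ℕ, Order.height P = n ∧ Order.coheight P = e ∧ n + e ≤ d := by
  have : Nonempty (PrimeSpectrum R) := ⟨P⟩
  have sum_le : Order.height P + Order.coheight P ≤ (d : ℕ∞) := by
    have iSup_eq : Order.krullDim (PrimeSpectrum R) = d := hd
    rw [Order.krullDim_eq_iSup_height_add_coheight_of_nonempty] at iSup_eq
    have le_iSup := le_iSup (fun a : PrimeSpectrum R ↦ Order.height a + Order.coheight a) P
    exact le_iSup.trans (by exact_mod_cast iSup_eq.le)
  have sum_ne_top := ne_top_of_le_ne_top (ENat.natCast_ne_top d) sum_le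
  obtain ⟨n, hn⟩ := ENat.ne_top_iff_exists.1 (ne_top_of_le_ne_top sum_ne_top le_self_add)
  obtain ⟨e, he⟩ := ENat.ne_top_iff_exists.1 (ne_top_of_le_ne_top sum_ne_top le_add_self)
  refine ⟨n, e, hn.symm, he.symm, ?_⟩
  rw [← hn, ← he] at sum_le
  exact_mod_cast sum_le

lemma ringKrullDim_localization_le_moduleDepth {R : Type} [CommRing R] [IsNoetherianRing R]
    [IsLocalRing R] (hR : IsCMLocalRing R) (q : Ideal R) [hq : q.IsPrime] :
    ringKrullDim (Localization.AtPrime q) ≤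
      (moduleDepth (Localization.AtPrime q) (Localization.AtPrime q) : WithBot ℕ∞) := by
  obtain ⟨d, dim_eq⟩ := exists_ringKrullDim_eq_natCast R
  have depth_eq : moduleDepth R R = d := by
    rw [IsCMLocalRing, dim_eq] at hR
    exact_mod_cast hR
  obtain ⟨n, e, height_eq, coheight_eq, add_le⟩ := exists_height_add_coheight_le dim_eq ⟨q, hq⟩
  have dim_localization : ringKrullDim (Localization.AtPrime q) = (n : ℕ∞) := by
    rw [IsLocalization.AtPrime.ringKrullDim_eq_height q,
      PrimeSpectrum.height_eq_orderHeight ⟨q, hq⟩, height_eq]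
  rw [dim_localization, WithBot.coe_le_coe, natCast_le_moduleDepth_iff]
  exact subsingleton_ext_residueField_localization q fun j hj ↦ subsingleton_ext_quotient_prime
    (natCast_le_moduleDepth_iff.1 depth_eq.ge) coheight_eq.le (by lia)

end CohenMacaulay

section Syzygy

open Abelian

variable {R : Type u} [CommRing R]

/-- A chosen surjection onto `X` from a free module of finite rank, the first step of a free
resolution. -/
def freeCover (X : FGModuleCat.{u} R) :
    (Fin (Module.Finite.exists_fin' R X).choose → R) →ₗ[R] X :=
  (Module.Finite.exists_fin' R X).choose_spec.choose

lemma freeCover_surjective (X : FGModuleCat.{u} R) : Surjective (freeCover X) :=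
  (Module.Finite.exists_fin' R X).choose_spec.choose_spec

/-- The ideal `Ann Tor₁(X, Y)`. -/
def annTorOne (X Y : FGModuleCat.{u} R) : Ideal R :=
  (torOne (freeCover X) Y).annihilator

lemma annihilator_torOne_eq_annTorOne {G : Type*} [AddCommGroup G] [Module R G]
    (X Y : FGModuleCat.{u} R) {g : G →ₗ[R] X} [Module.Flat R G]
    (hg : Surjective g) : (torOne g Y).annihilator = annTorOne X Y :=
  (annihilator_torOne_comm hg (freeCover_surjective Y)).trans
    (annihilator_torOne_comm (freeCover_surjective Y) (freeCover_surjective X))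

lemma annTorOne_comm (X Y : FGModuleCat.{u} R) : annTorOne X Y = annTorOne Y X :=
  annihilator_torOne_comm (freeCover_surjective X) (freeCover_surjective Y)

/-- The first syzygy `Ω X` with respect to `freeCover X`. The cover need not be minimal, so this
is the usual syzygy only up to free summands. The `n`-th syzygy is `syzygy^[n] X`. -/
def syzygy [IsNoetherianRing R] (X : FGModuleCat.{u} R) : FGModuleCat.{u} R :=
  .of R (LinearMap.ker (freeCover X))

lemma annTorOne_syzygy_right [IsNoetherianRing R] (X Y : FGModuleCat.{u} R) :
    annTorOne X (syzygy Y) = annTorOne (syzygy X) Y := by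
  rw [annTorOne_comm (syzygy X)]
  exact annihilator_torOne_ker_comm (freeCover Y) (freeCover X)

lemma annTorOne_iterate_syzygy_right [IsNoetherianRing R] (n : ℕ) (X Y : FGModuleCat.{u} R) :
    annTorOne X (syzygy^[n] Y) = annTorOne (syzygy^[n] X) Y := by
  induction n generalizing X with
  | zero => rfl
  | succ n ih => rw [iterate_succ_apply', annTorOne_syzygy_right, ih, ← iterate_succ_apply]

section Truncation

variable [IsLocalRing R]

/-- The truncation `X / mⁿ X`, a module of finite length approximating `X`. -/
def truncation (n : ℕ) (X : FGModuleCat.{u} R) : FGModuleCat.{u} R :=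
  .of R (X ⧸ (maximalIdeal R ^ n • (⊤ : Submodule R X)))

lemma subsingleton_localizedModule_truncation (n : ℕ) (X : FGModuleCat.{u} R) {q : Ideal R}
    [q.IsPrime] (hq : q ≠ maximalIdeal R) :
    Subsingleton (LocalizedModule q.primeCompl (truncation n X)) := by
  obtain ⟨x, x_mem, x_notMem⟩ : ∃ x ∈ maximalIdeal R, x ∉ q :=
    SetLike.exists_of_lt ((le_maximalIdeal Ideal.IsPrime.ne_top').lt_of_ne hq)
  rw [LocalizedModule.subsingleton_iff]
  intro v
  obtain ⟨v, rfl⟩ := Submodule.mkQ_surjective _ v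
  exact ⟨x ^ n, q.primeCompl.pow_mem x_notMem n, (Submodule.Quotient.mk_eq_zero _).2
    (Submodule.smul_mem_smul (Ideal.pow_mem_pow x_mem n) Submodule.mem_top)⟩

variable [IsNoetherianRing R]

lemma iInf_annTorOne_truncation_right_le (X Y : FGModuleCat.{u} R) :
    ⨅ n, annTorOne X (truncation n Y) ≤ annTorOne X Y :=
  iInf_annihilator_torOne_le (freeCover X)

lemma iInf_annTorOne_truncation_left_le (X Y : FGModuleCat.{u} R) :
    ⨅ n, annTorOne (truncation n X) Y ≤ annTorOne X Y := by
  simp only [annTorOne_comm _ Y]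
  exact iInf_annTorOne_truncation_right_le Y X

lemma iInf_annTorOne_iterate_syzygy_truncation_le (d : ℕ) (X Y : FGModuleCat.{u} R) :
    ⨅ (i) (j), annTorOne (syzygy^[d] (truncation i X)) (syzygy^[d] (truncation j Y)) ≤
      annTorOne X (syzygy^[d + d] Y) :=
  calc ⨅ (i) (j), annTorOne (syzygy^[d] (truncation i X)) (syzygy^[d] (truncation j Y))
    _ = ⨅ (i) (j), annTorOne (syzygy^[d + d] (truncation i X)) (truncation j Y) := by
      simp only [annTorOne_iterate_syzygy_right, ← iterate_add_apply]
    _ ≤ ⨅ i, annTorOne (syzygy^[d + d] (truncation i X)) Y :=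
      iInf_mono fun i ↦ iInf_annTorOne_truncation_right_le _ Y
    _ = ⨅ i, annTorOne (truncation i X) (syzygy^[d + d] Y) := by
      simp only [annTorOne_iterate_syzygy_right]
    _ ≤ annTorOne X (syzygy^[d + d] Y) := iInf_annTorOne_truncation_left_le X _

end Truncation

section LocalizedSyzygy

variable (S : Submonoid R)

instance free_localizedModule (M : Type*) [AddCommGroup M] [Module R M] [Module.Free R M] :
    Module.Free (Localization S) (LocalizedModule S M) :=
  Module.free_of_isLocalizedModule S (LocalizedModule.mkLinearMap S M)

variable [IsNoetherianRing R] (X : FGModuleCat.{u} R)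

lemma hasProjectiveDimensionLE_succ_localizedModule_iff {n : ℕ} :
    HasProjectiveDimensionLE (ModuleCat.of (Localization S) (LocalizedModule S X)) (n + 1) ↔
      HasProjectiveDimensionLE
        (ModuleCat.of (Localization S) (LocalizedModule S (syzygy X))) n :=
  hasProjectiveDimensionLE_succ_iff
    (LocalizedModule.map_injective S _ (LinearMap.ker (freeCover X)).subtype_injective)
    (LocalizedModule.map_exact S _ _ (LinearMap.exact_subtype_ker_map (freeCover X)))
    (LocalizedModule.map_surjective S _ (freeCover_surjective X))

variable {S X}

lemma hasProjectiveDimensionLE_localizedModule_of_iterate_syzygy {n : ℕ}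
    (h : Module.Projective (Localization S) (LocalizedModule S (syzygy^[n] X))) :
    HasProjectiveDimensionLE (ModuleCat.of (Localization S) (LocalizedModule S X)) n := by
  induction n generalizing X with
  | zero => exact hasProjectiveDimensionLE_zero_iff.2 h
  | succ n ih => exact (hasProjectiveDimensionLE_succ_localizedModule_iff S X).2 (ih h)

lemma projective_localizedModule_iterate_syzygy
    (h : Module.Projective (Localization S) (LocalizedModule S X)) (n : ℕ) :
    Module.Projective (Localization S) (LocalizedModule S (syzygy^[n] X)) := by
  induction n generalizing X with
  | zero => exact h
  | succ _ ih =>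
    have pd_le_zero := hasProjectiveDimensionLE_zero_iff.2 h
    have pd_le_one := hasProjectiveDimensionLT_of_ge
      (ModuleCat.of (Localization S) (LocalizedModule S X)) 1 2 (by lia)
    exact ih (hasProjectiveDimensionLE_zero_iff.1
      ((hasProjectiveDimensionLE_succ_localizedModule_iff S X).1 pd_le_one))

lemma subsingleton_ext_localizedModule_syzygy {Y : ModuleCat.{u} (Localization S)} {j : ℕ}
    (hS : Subsingleton (Ext Y (ModuleCat.of _ (Localization S)) j))
    (hX : ∀ i, i + 1 = j →
      Subsingleton (Ext Y (ModuleCat.of (Localization S) (LocalizedModule S X)) i)) :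
    Subsingleton (Ext Y (ModuleCat.of (Localization S) (LocalizedModule S (syzygy X))) j) := by
  refine subsingleton_ext_X₁_right (shortExact_moduleCatMk
    (LocalizedModule.map_injective S _ (LinearMap.ker (freeCover X)).subtype_injective)
    (LocalizedModule.map_exact S _ _ (LinearMap.exact_subtype_ker_map (freeCover X)))
    (LocalizedModule.map_surjective S _ (freeCover_surjective X))) ?_ hX
  exact subsingleton_ext_of_free hS _

lemma subsingleton_ext_localizedModule_iterate_syzygy {Y : ModuleCat.{u} (Localization S)} {n : ℕ}
    (hS : ∀ j < n, Subsingleton (Ext Y (ModuleCat.of _ (Localization S)) j)) (k : ℕ) :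
    ∀ j < n, j < k → Subsingleton
      (Ext Y (ModuleCat.of (Localization S) (LocalizedModule S (syzygy^[k] X))) j) := by
  induction k with
  | zero => lia
  | succ k ih =>
    intro j hjn hjk
    rw [iterate_succ_apply']
    exact subsingleton_ext_localizedModule_syzygy (hS j hjn) fun i hi ↦ ih i (by lia) (by lia)

end LocalizedSyzygy

end Syzygy

section Localization

variable {R : Type u} [CommRing R]

lemma injective_of_isLocalizedModule (S : Submonoid R) {M M' N N' : Type*} [AddCommGroup M]
    [AddCommGroup M'] [AddCommGroup N] [AddCommGroup N'] [Module R M] [Module R M'] [Module R N]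
    [Module R N'] (f : M →ₗ[R] M') (g : N →ₗ[R] N') [IsLocalizedModule S f]
    [IsLocalizedModule S g] {φ : M →ₗ[R] N} {φ' : M' →ₗ[R] N'} (hφ : φ' ∘ₗ f = g ∘ₗ φ) {a : R}
    (ha : a ∈ S) (h : ∀ x, φ x = 0 → a • x = 0) : Injective φ' := by
  rw [injective_iff_map_eq_zero]
  intro y hy
  obtain ⟨⟨x, s⟩, hx : s • y = f x⟩ := IsLocalizedModule.surj S f y
  have g_eq_zero : g (φ x) = 0 := by
    rw [← LinearMap.comp_apply, ← hφ, LinearMap.comp_apply, ← hx, Submonoid.smul_def, map_smul,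
      hy, smul_zero]
  obtain ⟨t, ht⟩ := (IsLocalizedModule.eq_zero_iff S g).1 g_eq_zero
  have smul_eq_zero : a • t • x = 0 := h _ (by rw [Submonoid.smul_def, map_smul]; exact ht)
  have f_eq_zero : f x = 0 := (IsLocalizedModule.eq_zero_iff S f).2
    ⟨⟨a, ha⟩ * t, by rw [mul_smul]; exact smul_eq_zero⟩
  exact IsLocalizedModule.smul_injective f s (by simp only [hx, f_eq_zero, smul_zero])

lemma rTensor_subtype_map_localization_injective (S : Submonoid R) (I : Ideal R) (K : Type*)
    [AddCommGroup K] [Module R K] {a : R} (ha : a ∈ S)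
    (h : ∀ t : I ⊗[R] K, I.subtype.rTensor K t = 0 → a • t = 0) :
    Injective ((I.map (algebraMap R (Localization S))).subtype.rTensor (LocalizedModule S K)) := by
  rw [← Ideal.localized'_eq_map (Localization S) S]
  let J := Submodule.localized' (Localization S) S (Algebra.linearMap R (Localization S)) I
  let mkR := Algebra.linearMap R (Localization S)
  let mkK := LocalizedModule.mkLinearMap S K
  let mkI : I →ₗ[R] J := I.toLocalized' (Localization S) S mkR
  have injective_over_R :
      Injective ((J.subtype.restrictScalars R).rTensor (LocalizedModule S K)) :=
    injective_of_isLocalizedModule S (M' := J ⊗[R] LocalizedModule S K)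
      (TensorProduct.map mkI mkK) (TensorProduct.map mkR mkK) (φ := I.subtype.rTensor K)
      (TensorProduct.ext' fun x k ↦ rfl) ha h
  let eJ := IsLocalization.moduleTensorEquiv S (Localization S) J (LocalizedModule S K)
  let eR := IsLocalization.moduleTensorEquiv S (Localization S) (Localization S)
    (LocalizedModule S K)
  have square : eR ∘ J.subtype.rTensor (LocalizedModule S K) =
      (J.subtype.restrictScalars R).rTensor (LocalizedModule S K) ∘ eJ := by
    funext t
    induction t with
    | zero => simp only [comp_apply, map_zero]
    | add t t' ht ht' => simp_all only [comp_apply, map_add]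
    | tmul x k => rfl
  have injective_comp : Injective (eR ∘ J.subtype.rTensor (LocalizedModule S K)) :=
    square ▸ injective_over_R.comp eJ.injective
  exact injective_comp.of_comp

lemma nonempty_localizedModule_quotient_equiv_residueField (p : Ideal R) [p.IsPrime] :
    Nonempty (LocalizedModule p.primeCompl (R ⧸ p) ≃ₗ[Localization.AtPrime p]
      ResidueField (Localization.AtPrime p)) := by
  let A := Localization.AtPrime p
  let e := (IsLocalizedModule.iso p.primeCompl (Submodule.toLocalizedQuotient' A p.primeCompl
    (Algebra.linearMap R A) p)).extendScalarsOfIsLocalization p.primeCompl A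
  have localized_eq : Submodule.localized' A p.primeCompl (Algebra.linearMap R A) p =
      maximalIdeal A :=
    (Ideal.localized'_eq_map _ _ _).trans (Localization.AtPrime.map_eq_maximalIdeal)
  exact ⟨e.trans (Submodule.quotEquivOfEq _ _ localized_eq)⟩

lemma free_localizedModule_of_annTorOne [IsNoetherianRing R] (p : Ideal R) [p.IsPrime]
    (K : FGModuleCat.{u} R) (h : ¬ annTorOne (.of R (R ⧸ p)) K ≤ p) :
    Module.Free (Localization.AtPrime p) (LocalizedModule p.primeCompl K) := by
  obtain ⟨a, a_mem, a_notMem⟩ := SetLike.not_le_iff_exists.1 h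
  have smul_eq_zero (t : p ⊗[R] K) (ht : p.subtype.rTensor K t = 0) : a • t = 0 := by
    rw [← annihilator_torOne_eq_annTorOne _ K (g := p.mkQ) p.mkQ_surjective,
      Submodule.mem_annihilator, torOne, p.ker_mkQ] at a_mem
    exact a_mem t ht
  have injective := rTensor_subtype_map_localization_injective p.primeCompl p K a_notMem
    smul_eq_zero
  rw [Localization.AtPrime.map_eq_maximalIdeal] at injective
  have := Module.finitePresentation_of_finite (Localization.AtPrime p)
    (LocalizedModule p.primeCompl K)
  exact Module.free_of_maximalIdeal_rTensor_injective injective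

end Localization

section MaximalCohenMacaulay

variable {R : Type} [CommRing R] [IsNoetherianRing R] [IsLocalRing R]

lemma isRegularLocal_of_isRegularLocalRing {S : Type} [CommRing S] [IsRegularLocalRing S] :
    IsRegularLocal S := by
  obtain ⟨s, card_s, span_s⟩ := Submodule.FG.exists_span_finset_card_eq_spanFinrank
    (maximalIdeal S).fg_of_isNoetherianRing
  exact ⟨inferInstance, s, span_s, card_s ▸ IsRegularLocalRing.spanFinrank_maximalIdeal⟩

lemma isMCMModule_iterate_syzygy (hR : IsCMLocalRing R) {d : ℕ} (hd : ringKrullDim R = d)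
    (X : FGModuleCat.{0} R) : IsMCMModule R (syzygy^[d] X) := by
  intro q _
  have depth_ge := ringKrullDim_localization_le_moduleDepth hR q
  have dim_le : ringKrullDim (Localization.AtPrime q) ≤ d := by
    rw [IsLocalization.AtPrime.ringKrullDim_eq_height q, ← hd]
    exact Ideal.height_le_ringKrullDim_of_ne_top Ideal.IsPrime.ne_top'
  obtain ⟨n, dim_eq⟩ := exists_ringKrullDim_eq_natCast (Localization.AtPrime q)
  rw [dim_eq] at depth_ge dim_le ⊢
  have n_le_d : n ≤ d := by exact_mod_cast dim_le
  have ext_vanishing := natCast_le_moduleDepth_iff.1 (WithBot.coe_le_coe.1 depth_ge)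
  exact WithBot.coe_le_coe.2 (natCast_le_moduleDepth_iff.2 fun j hj ↦
    subsingleton_ext_localizedModule_iterate_syzygy ext_vanishing d j hj (hj.trans_le n_le_d))

lemma memCM0_iterate_syzygy_truncation (hR : IsCMLocalRing R) {d : ℕ}
    (hd : ringKrullDim R = d) (n : ℕ) (X : FGModuleCat.{0} R) :
    MemCM0 R (ModuleCat.of R (syzygy^[d] (truncation n X) : FGModuleCat.{0} R)) := by
  refine ⟨inferInstance, isMCMModule_iterate_syzygy hR hd _, fun q _ hq ↦ ?_⟩
  have := subsingleton_localizedModule_truncation n X hq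
  have := projective_localizedModule_iterate_syzygy (S := q.primeCompl) (X := truncation n X)
    inferInstance d
  have free : Module.Free (Localization.AtPrime q)
      (LocalizedModule q.primeCompl (syzygy^[d] (truncation n X))) :=
    Module.free_of_flat_of_isLocalRing
  exact free

lemma iInf_annihilator_torMod_one_le_annTorOne (hR : IsCMLocalRing R) {d : ℕ}
    (hd : ringKrullDim R = d) (X Y : FGModuleCat.{0} R) :
    (⨅ (M : ModuleCat.{0} R) (_ : MemCM0 R M) (N : ModuleCat.{0} R) (_ : MemCM0 R N),
      Module.annihilator R (TorMod R 1 M N)) ≤ annTorOne X (syzygy^[d + d] Y) := by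
  refine le_trans (le_iInf₂ fun i j ↦ ?_) (iInf_annTorOne_iterate_syzygy_truncation_le d X Y)
  exact (iInf₂_le_of_le _ (memCM0_iterate_syzygy_truncation hR hd i X)
    (iInf₂_le _ (memCM0_iterate_syzygy_truncation hR hd j Y))).trans
    (annihilator_torMod_one_le _ _ (freeCover_surjective _))

end MaximalCohenMacaulay

theorem stmt17_general (R : Type) [CommRing R] [IsNoetherianRing R] [IsLocalRing R]
    (hCM : IsCMLocalRing R) (p : Ideal R) [p.IsPrime]
    (hp : ¬ (⨅ (M : ModuleCat.{0} R) (_ : MemCM0 R M) (N : ModuleCat.{0} R) (_ : MemCM0 R N),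
      Module.annihilator R (TorMod R 1 M N)) ≤ p) :
    IsRegularLocal (Localization.AtPrime p) := by
  obtain ⟨d, hd⟩ := exists_ringKrullDim_eq_natCast R
  let X : FGModuleCat.{0} R := .of R (R ⧸ p)
  have free : Module.Free (Localization.AtPrime p)
      (LocalizedModule p.primeCompl (syzygy^[d + d] X)) :=
    free_localizedModule_of_annTorOne p _ fun h ↦
      hp ((iInf_annihilator_torMod_one_le_annTorOne hCM hd X X).trans h)
  have pd_le : HasProjectiveDimensionLE
      (ModuleCat.of (Localization.AtPrime p) (LocalizedModule p.primeCompl X)) (d + d) :=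
    hasProjectiveDimensionLE_localizedModule_of_iterate_syzygy inferInstance
  obtain ⟨e⟩ := nonempty_localizedModule_quotient_equiv_residueField p
  have pd_residueField_le : HasProjectiveDimensionLE
      (ModuleCat.of _ (ResidueField (Localization.AtPrime p))) (d + d) :=
    hasProjectiveDimensionLT_of_iso (X := ModuleCat.of _ (LocalizedModule p.primeCompl X))
      e.toModuleIso _
  have := isRegularLocalRing_of_hasProjectiveDimensionLE pd_residueField_le
  exact isRegularLocal_of_isRegularLocalRing

/-- Let `R` be a Cohen-Macaulay noetherian local ring with maximal ideal
`m`. If `⋂_{i>0, M,N ∈ CM₀(R)} Ann Tor_i(M,N)` is `m`-primary, then `R` is an isolated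
singularity. -/
theorem stmt17 (R : Type) [CommRing R] [IsNoetherianRing R] [IsLocalRing R]
    (hCM : IsCMLocalRing R)
    (hprim : (⨅ (i : ℕ) (_ : 0 < i) (M : ModuleCat.{0} R) (_ : MemCM0 R M)
        (N : ModuleCat.{0} R) (_ : MemCM0 R N),
        Module.annihilator R (TorMod R i M N)).radical = maximalIdeal R) :
    ∀ (p : Ideal R) [p.IsPrime], p ≠ maximalIdeal R →
      IsRegularLocal (Localization.AtPrime p) := by
  intro p hp p_ne
  refine stmt17_general R hCM p fun h ↦ p_ne ((le_maximalIdeal hp.ne_top).antisymm ?_)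
  exact hprim ▸ hp.radical_le_iff.2 ((iInf₂_le 1 one_pos).trans h)

end
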